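/- arXiv:1812.04762 — 2 statements merged into one kernel-verified Lean document; each statement's English description precedes it below -/
import Mathlib

section
/- In the Golub–Kahan bidiagonalization setup, the quantities γ_k^{cgme} are strictly decreasing: for every k with 1 ≤ k ≤ n−1 one has γ_{k+1}^{cgme} < γ_k^{cgme}. -/
open Matrix

/-- Spectral norm (largest singular value) of a real matrix. -/
noncomputable def specNorm {a b : ℕ} (M : Matrix (Fin a) (Fin b) ℝ) : ℝ :=
  ‖LinearMap.toContinuousLinearMap (Matrix.toEuclideanLin M)‖

/-- The `j`-th largest singular value of a real matrix (`j ≥ 1`), characterized via the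
Eckart–Young theorem as the minimal spectral-norm distance to matrices of rank `< j`;
it is `0` when `j` exceeds the smaller dimension. -/
noncomputable def singVal {a b : ℕ} (M : Matrix (Fin a) (Fin b) ℝ) (j : ℕ) : ℝ :=
  sInf {r : ℝ | ∃ D : Matrix (Fin a) (Fin b) ℝ, D.rank < j ∧ r = specNorm (M - D)}

/-- The matrix of the first `k` columns of `M`. -/
def colSub {a b : ℕ} (M : Matrix (Fin a) (Fin b) ℝ) (k : ℕ) (hk : k ≤ b) :
    Matrix (Fin a) (Fin k) ℝ :=
  M.submatrix id fun j => ⟨j.1, lt_of_lt_of_le j.2 hk⟩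

/-- The leading `r × c` submatrix of `M`. -/
def subUL {a b : ℕ} (M : Matrix (Fin a) (Fin b) ℝ) (r c : ℕ) (hr : r ≤ a) (hc : c ≤ b) :
    Matrix (Fin r) (Fin c) ℝ :=
  M.submatrix (fun i => ⟨i.1, lt_of_lt_of_le i.2 hr⟩) (fun j => ⟨j.1, lt_of_lt_of_le j.2 hc⟩)

lemma spec_le {a b : ℕ} (M : Matrix (Fin a) (Fin b) ℝ) (x : Fin b → ℝ) :
    (M *ᵥ x) ⬝ᵥ (M *ᵥ x) ≤ specNorm M ^ 2 * (x ⬝ᵥ x) := by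
  have h := (LinearMap.toContinuousLinearMap (Matrix.toEuclideanLin M)).le_opNorm (WithLp.toLp 2 x)
  have h2 := pow_le_pow_left₀ (norm_nonneg _) h 2
  rw [mul_pow, EuclideanSpace.real_norm_sq_eq, EuclideanSpace.real_norm_sq_eq] at h2
  simpa [specNorm, dotProduct, pow_two] using h2

lemma spec_nonneg {a b : ℕ} (M : Matrix (Fin a) (Fin b) ℝ) : 0 ≤ specNorm M := norm_nonneg _

lemma spec_attain {a b : ℕ} (hb : 0 < b) (M : Matrix (Fin a) (Fin b) ℝ) :
    ∃ x : Fin b → ℝ, x ≠ 0 ∧ (M *ᵥ x) ⬝ᵥ (M *ᵥ x) = specNorm M ^ 2 * (x ⬝ᵥ x) := by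
  set T := LinearMap.toContinuousLinearMap (Matrix.toEuclideanLin M) with hT
  have : Nonempty (Fin b) := ⟨⟨0, hb⟩⟩
  have hne : (Metric.sphere (0 : EuclideanSpace ℝ (Fin b)) 1).Nonempty :=
    NormedSpace.sphere_nonempty.2 zero_le_one
  obtain ⟨x, hx, hmax⟩ := (isCompact_sphere (0 : EuclideanSpace ℝ (Fin b)) 1).exists_isMaxOn hne
    (f := fun x => ‖T x‖) (by fun_prop)
  have hx1 : ‖x‖ = 1 := by simpa using hx
  have hle : ‖T‖ ≤ ‖T x‖ := by
    refine T.opNorm_le_of_unit_norm (norm_nonneg _) ?_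
    intro y hy
    exact hmax (by simpa using hy)
  have hge : ‖T x‖ ≤ ‖T‖ := by simpa [hx1] using T.le_opNorm x
  have he : ‖T x‖ = ‖T‖ := le_antisymm hge hle
  refine ⟨x.ofLp, ?_, ?_⟩
  · intro h0
    have : x = 0 := by ext i; simpa using congrFun h0 i
    simp [this] at hx1
  · have h1 : ‖T x‖ ^ 2 = ‖T‖ ^ 2 * ‖x‖ ^ 2 := by rw [he, hx1]; ring
    rw [EuclideanSpace.real_norm_sq_eq, EuclideanSpace.real_norm_sq_eq] at h1
    simpa [hT, specNorm, dotProduct, pow_two] using h1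

lemma spec_transpose {a b : ℕ} (M : Matrix (Fin a) (Fin b) ℝ) : specNorm Mᵀ = specNorm M := by
  have h : ∀ {a b : ℕ} (M : Matrix (Fin a) (Fin b) ℝ), specNorm Mᵀ ≤ specNorm M := by
    intro a b M
    refine ContinuousLinearMap.opNorm_le_bound _ (spec_nonneg M) ?_
    intro v
    by_cases hz : ‖toEuclideanLin Mᵀ v‖ = 0
    · simp only [LinearMap.coe_toContinuousLinearMap']
      rw [hz]; exact mul_nonneg (spec_nonneg M) (norm_nonneg _)
    have hpos : 0 < ‖toEuclideanLin Mᵀ v‖ := lt_of_le_of_ne (norm_nonneg _) (Ne.symm hz)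
    have h1 : ‖toEuclideanLin Mᵀ v‖ ^ 2 = inner ℝ v (toEuclideanLin M (toEuclideanLin Mᵀ v)) := by
      rw [EuclideanSpace.real_norm_sq_eq]
      have : (Mᵀ *ᵥ v.ofLp) ⬝ᵥ (Mᵀ *ᵥ v.ofLp) = (M *ᵥ (Mᵀ *ᵥ v.ofLp)) ⬝ᵥ v.ofLp := by
        rw [dotProduct_comm _ v.ofLp, Matrix.dotProduct_mulVec v.ofLp M, Matrix.mulVec_transpose]
      simpa [dotProduct, pow_two, PiLp.inner_apply] using this
    have h2 := real_inner_le_norm v (toEuclideanLin M (toEuclideanLin Mᵀ v))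
    have h3 : ‖toEuclideanLin M (toEuclideanLin Mᵀ v)‖ ≤ specNorm M * ‖toEuclideanLin Mᵀ v‖ :=
      (LinearMap.toContinuousLinearMap (Matrix.toEuclideanLin M)).le_opNorm _
    have h4 := mul_le_mul_of_nonneg_left h3 (norm_nonneg v)
    show ‖toEuclideanLin Mᵀ v‖ ≤ _
    nlinarith
  exact le_antisymm (h M) (by simpa using h Mᵀ)

lemma spec_eig {a b : ℕ} (hb : 0 < b) (M : Matrix (Fin a) (Fin b) ℝ) :
    ∃ x : Fin b → ℝ, x ≠ 0 ∧ (M *ᵥ x) ⬝ᵥ (M *ᵥ x) = specNorm M ^ 2 * (x ⬝ᵥ x) ∧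
      (Mᵀ *ᵥ (M *ᵥ x)) = specNorm M ^ 2 • x := by
  obtain ⟨x, hx, h⟩ := spec_attain hb M
  refine ⟨x, hx, h, ?_⟩
  have h1 := spec_le Mᵀ (M *ᵥ x)
  rw [spec_transpose] at h1
  have h2 : (Mᵀ *ᵥ (M *ᵥ x)) ⬝ᵥ x = (M *ᵥ x) ⬝ᵥ (M *ᵥ x) := by
    rw [Matrix.mulVec_transpose, ← Matrix.dotProduct_mulVec]
  rw [← sub_eq_zero, ← dotProduct_self_eq_zero]
  refine le_antisymm ?_ (by simpa using dotProduct_star_self_nonneg (Mᵀ *ᵥ (M *ᵥ x) - specNorm M ^ 2 • x))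
  simp only [sub_dotProduct, dotProduct_sub, smul_dotProduct, dotProduct_smul, smul_eq_mul]
  rw [dotProduct_comm x, h2]
  rw [h] at h1 ⊢
  nlinarith

lemma proj_eq {m n : ℕ} (P : Matrix (Fin m) (Fin (n + 1)) ℝ) (hP : Pᵀ * P = 1)
    (C : Matrix (Fin (n + 1)) (Fin n) ℝ) (k : ℕ) (hk : k ≤ n + 1) :
    (1 - colSub P k hk * (colSub P k hk)ᵀ) * (P * C) =
      P * (Matrix.diagonal (fun i : Fin (n + 1) => if (i : ℕ) < k then (0 : ℝ) else 1) * C) := by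
  have h : colSub P k hk * (colSub P k hk)ᵀ =
      P * Matrix.diagonal (fun i : Fin (n + 1) => if (i : ℕ) < k then (1 : ℝ) else 0) * Pᵀ := by
    ext i j
    rw [Matrix.mul_apply, Matrix.mul_apply]
    simp only [Matrix.mul_diagonal, Matrix.transpose_apply, colSub, Matrix.submatrix_apply, id]
    symm
    have : ∀ x : Fin (n + 1), P i x * (if (x : ℕ) < k then (1 : ℝ) else 0) * P j x =
        if (x : ℕ) < k then P i x * P j x else 0 := by intro x; split_ifs <;> simp
    simp only [this]
    rw [← Finset.sum_filter]
    symm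
    refine Finset.sum_bij (fun (a : Fin k) _ => (⟨a.1, lt_of_lt_of_le a.2 hk⟩ : Fin (n + 1))) ?_ ?_ ?_ ?_
    · intro a _; simp
    · intro a _ b _ hab; simpa [Fin.ext_iff] using hab
    · intro c hc; exact ⟨⟨c.1, by simpa using hc⟩, Finset.mem_univ _, rfl⟩
    · intro a _; rfl
  rw [h, Matrix.sub_mul, Matrix.one_mul, Matrix.mul_assoc _ Pᵀ, ← Matrix.mul_assoc Pᵀ, hP, Matrix.one_mul,
    Matrix.mul_assoc, ← Matrix.mul_sub]
  congr 1
  ext i j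
  simp only [Matrix.sub_apply, Matrix.diagonal_mul]
  split_ifs <;> ring

lemma chain {n : ℕ} (α β : Fin n → ℝ) (hα : ∀ i, 0 < α i) (hβ : ∀ i, 0 < β i)
    (B : Matrix (Fin (n + 1)) (Fin n) ℝ)
    (hB : ∀ (i : Fin (n + 1)) (j : Fin n),
      B i j = if (i : ℕ) = (j : ℕ) then α j
        else if (i : ℕ) = (j : ℕ) + 1 then β j else 0)
    (k : ℕ) (hk1 : 1 ≤ k) (hk2 : k < n) (g : ℝ) (hg : g ≠ 0) (y : Fin n → ℝ)
    (hz : (B *ᵥ y) ⟨k, by omega⟩ = 0)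
    (he : Bᵀ *ᵥ (Matrix.diagonal (fun i : Fin (n + 1) => if (i : ℕ) < k + 1 then (0 : ℝ) else 1)
      *ᵥ (B *ᵥ y)) = g • y) : y = 0 := by
  have hrow : ∀ (i : ℕ) (h : i + 1 < n), (B *ᵥ y) ⟨i + 1, by omega⟩ =
      β ⟨i, by omega⟩ * y ⟨i, by omega⟩ + α ⟨i + 1, h⟩ * y ⟨i + 1, h⟩ := by
    intro i h
    simp only [Matrix.mulVec, dotProduct]
    rw [Finset.sum_eq_add (⟨i, by omega⟩ : Fin n) ⟨i + 1, h⟩ (by simp)]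
    · simp [hB]
    · rintro c - ⟨h1, h2⟩
      have h1' : (c : ℕ) ≠ i := fun e => h1 (Fin.ext e)
      have h2' : (c : ℕ) ≠ i + 1 := fun e => h2 (Fin.ext e)
      rw [hB, if_neg (by simp; omega), if_neg (by simp; omega), zero_mul]
    · simp
    · simp
  set z := B *ᵥ y with hzdef
  set w : Fin (n + 1) → ℝ := fun i => if (i : ℕ) < k + 1 then 0 else z i with hw
  have hcol : ∀ (j : ℕ) (h : j < n),
      α ⟨j, h⟩ * w ⟨j, by omega⟩ + β ⟨j, h⟩ * w ⟨j + 1, by omega⟩ = g * y ⟨j, h⟩ := by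
    intro j h
    have h1 := congrFun he ⟨j, h⟩
    have h0 : (Matrix.diagonal (fun i : Fin (n + 1) => if (i : ℕ) < k + 1 then (0 : ℝ) else 1)
      *ᵥ z) = w := by
      ext i; rw [Matrix.mulVec_diagonal]; simp [hw]
    rw [h0] at h1
    simp only [Matrix.mulVec, dotProduct, Matrix.transpose_apply, Pi.smul_apply, smul_eq_mul] at h1
    rw [← h1]
    symm
    rw [Finset.sum_eq_add (⟨j, by omega⟩ : Fin (n + 1)) ⟨j + 1, by omega⟩ (by simp)]
    · simp [hB]
    · rintro c - ⟨h1, h2⟩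
      have h1' : (c : ℕ) ≠ j := fun e => h1 (Fin.ext e)
      have h2' : (c : ℕ) ≠ j + 1 := fun e => h2 (Fin.ext e)
      rw [hB, if_neg (by simp; omega), if_neg (by simp; omega), zero_mul]
    · simp
    · simp
  have key : ∀ (i : ℕ) (h : i < n), y ⟨i, h⟩ = 0 ∧ w ⟨i + 1, by omega⟩ = 0 := by
    intro i
    induction i with
    | zero =>
      intro h
      have hc := hcol 0 h
      have w0 : w ⟨0, by omega⟩ = 0 := by simp [hw]
      have w1 : w ⟨0 + 1, by omega⟩ = 0 := by simp only [hw]; rw [if_pos (by omega)]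
      rw [w0, w1] at hc
      refine ⟨?_, w1⟩
      have : g * y ⟨0, h⟩ = 0 := by rw [← hc]; ring
      exact (mul_eq_zero.1 this).resolve_left hg
    | succ i ih =>
      intro h
      obtain ⟨hy, hwi⟩ := ih (by omega)
      have hc := hcol (i + 1) h
      rw [hwi] at hc
      by_cases hik : i + 1 < k
      · have w1 : w ⟨i + 1 + 1, by omega⟩ = 0 := by simp only [hw]; rw [if_pos (by omega)]
        rw [w1] at hc
        refine ⟨?_, w1⟩
        have : g * y ⟨i + 1, h⟩ = 0 := by rw [← hc]; ring
        exact (mul_eq_zero.1 this).resolve_left hg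
      · have hzi : z ⟨i + 1, by omega⟩ = 0 := by
          by_cases he : i + 1 = k
          · subst he; exact hz
          · simp only [hw] at hwi; rwa [if_neg (by omega)] at hwi
        have hr := hrow i h
        rw [hzi, hy] at hr
        have hy1 : y ⟨i + 1, h⟩ = 0 := by
          have : α ⟨i + 1, h⟩ * y ⟨i + 1, h⟩ = 0 := by linarith
          exact (mul_eq_zero.1 this).resolve_left (hα _).ne'
        refine ⟨hy1, ?_⟩
        rw [hy1] at hc
        have : β ⟨i + 1, h⟩ * w ⟨i + 1 + 1, by omega⟩ = 0 := by linarith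
        exact (mul_eq_zero.1 this).resolve_left (hβ _).ne'
  ext i
  exact (key i.1 i.2).1

/-- `γ_{k+1}^{cgme} < γ_k^{cgme}` for `1 ≤ k ≤ n-1`. -/
theorem cgme_rank_k_error_strict_decreasing
    (m n : ℕ) (hn : 2 ≤ n) (hmn : n < m)
    (A : Matrix (Fin m) (Fin n) ℝ)
    (P : Matrix (Fin m) (Fin (n + 1)) ℝ) (hP : Pᵀ * P = 1)
    (Q : Matrix (Fin n) (Fin n) ℝ) (hQ : Qᵀ * Q = 1)
    (α : Fin n → ℝ) (hα : ∀ i, 0 < α i)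
    (β : Fin n → ℝ) (hβ : ∀ i, 0 < β i)
    (B : Matrix (Fin (n + 1)) (Fin n) ℝ)
    (hB : ∀ (i : Fin (n + 1)) (j : Fin n),
      B i j = if (i : ℕ) = (j : ℕ) then α j
        else if (i : ℕ) = (j : ℕ) + 1 then β j else 0)
    (hA : A = P * B * Qᵀ)
    (σ : Fin n → ℝ) (hσpos : ∀ i, 0 < σ i)
    (hσstrict : ∀ i j : Fin n, i < j → σ j < σ i)
    (hσ : ∀ i : Fin n, σ i = singVal A ((i : ℕ) + 1))
    (k : ℕ) (hk1 : 1 ≤ k) (hk2 : k ≤ n - 1) :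
    specNorm ((1 - colSub P (k + 1) (by omega) * (colSub P (k + 1) (by omega))ᵀ) * A) <
      specNorm ((1 - colSub P k (by omega) * (colSub P k (by omega))ᵀ) * A) := by
  have hQ' : Q * Qᵀ = 1 := mul_eq_one_comm.1 hQ
  set D : ℕ → Matrix (Fin (n + 1)) (Fin (n + 1)) ℝ := fun k =>
    Matrix.diagonal (fun i : Fin (n + 1) => if (i : ℕ) < k then (0 : ℝ) else 1) with hD
  have hN : ∀ (l : ℕ) (hl : l ≤ n + 1), (1 - colSub P l hl * (colSub P l hl)ᵀ) * A =
      P * (D l * (B * Qᵀ)) := by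
    intro l hl
    rw [hA, Matrix.mul_assoc P, proj_eq P hP]
  rw [hN, hN]
  have hPP : ∀ u v : Fin (n + 1) → ℝ, (P *ᵥ u) ⬝ᵥ (P *ᵥ v) = u ⬝ᵥ v := by
    intro u v
    rw [Matrix.dotProduct_mulVec, ← Matrix.mulVec_transpose, Matrix.mulVec_mulVec, hP,
      Matrix.one_mulVec]
  have hQQ : ∀ u : Fin n → ℝ, (Qᵀ *ᵥ u) ⬝ᵥ (Qᵀ *ᵥ u) = u ⬝ᵥ u := by
    intro u
    rw [Matrix.dotProduct_mulVec, ← Matrix.mulVec_transpose, Matrix.mulVec_mulVec,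
      Matrix.transpose_transpose, hQ', Matrix.one_mulVec]
  have hnorm : ∀ (l : ℕ) (x : Fin n → ℝ),
      ((P * (D l * (B * Qᵀ))) *ᵥ x) ⬝ᵥ ((P * (D l * (B * Qᵀ))) *ᵥ x) =
        ∑ i : Fin (n + 1), if (i : ℕ) < l then 0 else ((B *ᵥ (Qᵀ *ᵥ x)) i) ^ 2 := by
    intro l x
    simp only [← Matrix.mulVec_mulVec]
    rw [hPP]
    simp only [dotProduct, hD, Matrix.mulVec_diagonal]
    refine Finset.sum_congr rfl fun i _ => ?_
    split_ifs <;> ring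
  set g := specNorm (P * (D (k + 1) * (B * Qᵀ))) with hg
  by_contra hcon
  push Not at hcon
  have hg0 : g ≠ 0 := by
    intro h0
    have h1 := spec_le (P * (D (k + 1) * (B * Qᵀ))) (Q *ᵥ Pi.single ⟨n - 1, by omega⟩ 1)
    rw [← hg, h0, hnorm, Matrix.mulVec_mulVec _ Qᵀ Q, hQ, Matrix.one_mulVec] at h1
    have h2 := Finset.single_le_sum (s := Finset.univ) (f := fun i : Fin (n + 1) =>
      if (i : ℕ) < k + 1 then 0 else
        ((B *ᵥ (Pi.single (⟨n - 1, by omega⟩ : Fin n) (1 : ℝ))) i) ^ 2)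
      (fun i _ => by split_ifs <;> positivity) (Finset.mem_univ (Fin.last n))
    have h3 : B (Fin.last n) ⟨n - 1, by omega⟩ = β ⟨n - 1, by omega⟩ := by
      rw [hB, if_neg (by simp; omega), if_pos (by simp; omega)]
    simp only [Fin.val_last] at h2
    rw [if_neg (by omega), Matrix.mulVec_single_one, Matrix.col_apply, h3] at h2
    have h4 := pow_pos (hβ ⟨n - 1, by omega⟩) 2
    rw [Matrix.mulVec_single_one] at h1
    linarith
  obtain ⟨x, hx, hxe, hxx⟩ := spec_eig (by omega) (P * (D (k + 1) * (B * Qᵀ)))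
  rw [← hg] at hxe hxx
  have hz : (B *ᵥ (Qᵀ *ᵥ x)) ⟨k, by omega⟩ = 0 := by
    have h1 := spec_le (P * (D k * (B * Qᵀ))) x
    have h2 := pow_le_pow_left₀ (spec_nonneg _) hcon 2
    have h3 : 0 ≤ x ⬝ᵥ x := by simpa using dotProduct_star_self_nonneg x
    have h4 := mul_le_mul_of_nonneg_right h2 h3
    have h5 := h1.trans h4
    rw [← hxe, hnorm, hnorm, ← sub_nonpos, ← Finset.sum_sub_distrib] at h5
    have h6 := Finset.single_le_sum (s := Finset.univ) (f := fun i : Fin (n + 1) =>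
      ((if (i : ℕ) < k then 0 else ((B *ᵥ (Qᵀ *ᵥ x)) i) ^ 2) -
        (if (i : ℕ) < k + 1 then 0 else ((B *ᵥ (Qᵀ *ᵥ x)) i) ^ 2)))
      (fun i _ => by
        have := sq_nonneg ((B *ᵥ (Qᵀ *ᵥ x)) i)
        split_ifs <;> first | omega | linarith) (Finset.mem_univ (⟨k, by omega⟩ : Fin (n + 1)))
    have h7 := h6.trans h5
    simp only [lt_irrefl, if_false, Nat.lt_succ_self, if_true, sub_zero] at h7
    exact pow_eq_zero_iff (two_ne_zero) |>.1 (le_antisymm h7 (sq_nonneg _))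
  have hDD : (D (k + 1))ᵀ * D (k + 1) = D (k + 1) := by
    simp only [hD, Matrix.diagonal_transpose, Matrix.diagonal_mul_diagonal]
    congr 1
    ext i
    split_ifs <;> simp
  have hy : Qᵀ *ᵥ x = 0 := by
    refine chain α β hα hβ B hB k hk1 (by omega) (g ^ 2) (pow_ne_zero 2 hg0) _ hz ?_
    have h1 := congrArg (fun v => Qᵀ *ᵥ v) hxx
    simp only [Matrix.mulVec_smul] at h1
    rw [← h1]
    change Bᵀ *ᵥ (D (k + 1) *ᵥ _) = _
    simp only [Matrix.mulVec_mulVec]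
    congr 1
    simp only [Matrix.transpose_mul, Matrix.transpose_transpose]
    simp only [Matrix.mul_assoc]
    rw [← Matrix.mul_assoc Pᵀ P, hP, Matrix.one_mul, ← Matrix.mul_assoc Qᵀ Q, hQ, Matrix.one_mul,
      ← Matrix.mul_assoc (D (k + 1))ᵀ, hDD]
  apply hx
  rw [← Matrix.one_mulVec x, ← hQ', ← Matrix.mulVec_mulVec, hy, Matrix.mulVec_zero]
end

section
/- Let k ≥ 1 and let B_k ∈ ℝ^{(k+1)×k} be lower bidiagonal with (B_k)_{ii} = α_i > 0 (1 ≤ i ≤ k), (B_k)_{i+1,i} = β_{i+1} > 0 (1 ≤ i ≤ k), and all other entries zero, and let B̄_k ∈ ℝ^{k×k} be the matrix of the first k rows of B_k. Then the singular values θ_1 ≥ θ_2 ≥ ⋯ ≥ θ_k of B_k and θ̄_1 ≥ ⋯ ≥ θ̄_k of B̄_k are all simple and strictly interlace: θ_1 > θ̄_1 > θ_2 > θ̄_2 > ⋯ > θ_k > θ̄_k. -/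
open Matrix

namespace BidiagAux

abbrev EV (n : ℕ) := EuclideanSpace ℝ (Fin n)

lemma exists_inf {n : ℕ} (V W : Submodule ℝ (EV n))
    (h : n < Module.finrank ℝ V + Module.finrank ℝ W) : ∃ x ∈ V, x ∈ W ∧ x ≠ 0 := by
  have h1 := Submodule.finrank_sup_add_finrank_inf_eq V W
  have h2 : Module.finrank ℝ (V ⊔ W : Submodule ℝ (EV n)) ≤ n := by
    have := Submodule.finrank_le (V ⊔ W)
    simpa using this
  have h3 : 0 < Module.finrank ℝ (V ⊓ W : Submodule ℝ (EV n)) := by omega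
  have h4 : V ⊓ W ≠ ⊥ := by
    intro h5
    rw [h5] at h3
    simp at h3
  obtain ⟨x, hx, hx0⟩ := Submodule.exists_mem_ne_zero_of_ne_bot h4
  exact ⟨x, hx.1, hx.2, hx0⟩

lemma rank_eq {a b : ℕ} (D : Matrix (Fin a) (Fin b) ℝ) :
    D.rank = Module.finrank ℝ (LinearMap.range (Matrix.toEuclideanLin D)) := by
  rw [Matrix.toEuclideanLin_eq_toLin_orthonormal]
  exact Matrix.rank_eq_finrank_range_toLin _ _ _

lemma spec_le {a b : ℕ} (M : Matrix (Fin a) (Fin b) ℝ) (x : EV b) :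
    ‖Matrix.toEuclideanLin M x‖ ≤ specNorm M * ‖x‖ :=
  (LinearMap.toContinuousLinearMap (Matrix.toEuclideanLin M)).le_opNorm x

lemma le_singVal {a b : ℕ} (M : Matrix (Fin a) (Fin b) ℝ) (j : ℕ) (hj : 1 ≤ j) (s : ℝ)
    (V : Submodule ℝ (EV b)) (hV : Module.finrank ℝ V = j)
    (h : ∀ x ∈ V, s * ‖x‖ ≤ ‖Matrix.toEuclideanLin M x‖) : s ≤ singVal M j := by
  apply le_csInf
  · exact ⟨_, 0, by simp; omega, rfl⟩
  · rintro r ⟨D, hD, rfl⟩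
    rw [rank_eq] at hD
    obtain ⟨K, hK⟩ : ∃ K : Submodule ℝ (EV b), K = LinearMap.ker (Matrix.toEuclideanLin D) :=
      ⟨_, rfl⟩
    have h1 : Module.finrank ℝ (LinearMap.range (Matrix.toEuclideanLin D)) +
        Module.finrank ℝ K = b := by
      rw [hK]
      exact (LinearMap.finrank_range_add_finrank_ker (Matrix.toEuclideanLin D)).trans
        finrank_euclideanSpace_fin
    obtain ⟨x, hxV, hxD, hx0⟩ := exists_inf V K (by omega)
    rw [hK] at hxD
    have h2 := spec_le (M - D) x
    rw [map_sub, LinearMap.sub_apply, LinearMap.mem_ker.1 hxD, sub_zero] at h2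
    have h3 := h x hxV
    exact le_of_mul_le_mul_right (h3.trans h2) (norm_pos_iff.2 hx0)

lemma singVal_le {a b : ℕ} (M : Matrix (Fin a) (Fin b) ℝ) (j : ℕ) (s : ℝ) (hs : 0 ≤ s)
    (W : Submodule ℝ (EV b)) (hW : b < Module.finrank ℝ W + j)
    (h : ∀ x ∈ W, ‖Matrix.toEuclideanLin M x‖ ≤ s * ‖x‖) : singVal M j ≤ s := by
  set P : EV b →ₗ[ℝ] EV b := (Wᗮ.starProjection : EV b →L[ℝ] EV b).toLinearMap with hP
  set D : Matrix (Fin a) (Fin b) ℝ :=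
    Matrix.toEuclideanLin.symm (Matrix.toEuclideanLin M ∘ₗ P) with hD
  have hDl : Matrix.toEuclideanLin D = Matrix.toEuclideanLin M ∘ₗ P := by
    rw [hD, LinearEquiv.apply_symm_apply]
  have hrank : D.rank < j := by
    rw [rank_eq, hDl, LinearMap.range_comp]
    have h1 : Module.finrank ℝ (Submodule.map (Matrix.toEuclideanLin M) (LinearMap.range P)) ≤
        Module.finrank ℝ (LinearMap.range P) := Submodule.finrank_map_le _ _
    have h2 : LinearMap.range P ≤ Wᗮ := by
      rintro _ ⟨y, rfl⟩
      exact Submodule.starProjection_apply_mem _ _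
    have h3 : Module.finrank ℝ (LinearMap.range P) ≤ Module.finrank ℝ Wᗮ :=
      Submodule.finrank_mono h2
    have h4 : Module.finrank ℝ W + Module.finrank ℝ Wᗮ = b :=
      (Submodule.finrank_add_finrank_orthogonal W).trans finrank_euclideanSpace_fin
    exact lt_of_le_of_lt (h1.trans h3) (by omega)
  have hbd : BddBelow {r : ℝ | ∃ D : Matrix (Fin a) (Fin b) ℝ, D.rank < j ∧ r = specNorm (M - D)} := by
    refine ⟨0, ?_⟩
    rintro r ⟨D, -, rfl⟩
    exact norm_nonneg _
  refine (csInf_le hbd ⟨D, hrank, rfl⟩).trans ?_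
  refine ContinuousLinearMap.opNorm_le_bound _ hs fun x => ?_
  have hx : (LinearMap.toContinuousLinearMap (Matrix.toEuclideanLin (M - D))) x
      = Matrix.toEuclideanLin M (W.starProjection x) := by
    have : x - Wᗮ.starProjection x = W.starProjection x := by
      rw [Submodule.starProjection_orthogonal']
      simp
    rw [← this]
    simp only [LinearMap.coe_toContinuousLinearMap', map_sub, LinearMap.sub_apply, hDl]
    rfl
  rw [hx]
  refine (h _ (Submodule.starProjection_apply_mem _ _)).trans ?_
  gcongr
  exact Submodule.norm_starProjection_apply_le _ _

lemma finrank_span_set {n : ℕ} (v : OrthonormalBasis (Fin n) ℝ (EV n)) (s : Finset (Fin n)) :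
    Module.finrank ℝ (Submodule.span ℝ (v '' (s : Set (Fin n)))) = s.card := by
  have h := v.orthonormal.linearIndependent
  have h2 : LinearIndependent ℝ (fun i : s => v i) := h.comp _ Subtype.val_injective
  have h3 := finrank_span_eq_card h2
  have h4 : Set.range (fun i : s => v i) = v '' (s : Set (Fin n)) := by
    ext y; simp
  rw [h4] at h3
  simpa using h3

lemma inner_span_zero {n : ℕ} (v : OrthonormalBasis (Fin n) ℝ (EV n)) (s : Finset (Fin n))
    (x : EV n) (hx : x ∈ Submodule.span ℝ (v '' (s : Set (Fin n)))) (l : Fin n) (hl : l ∉ s) :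
    inner ℝ (v l) x = 0 := by
  have h : Submodule.span ℝ (v '' (s : Set (Fin n))) ≤ (ℝ ∙ v l)ᗮ := by
    rw [Submodule.span_le]
    rintro _ ⟨i, hi, rfl⟩
    rw [SetLike.mem_coe, Submodule.mem_orthogonal_singleton_iff_inner_right]
    apply v.orthonormal.2
    rintro rfl
    exact hl hi
  exact Submodule.mem_orthogonal_singleton_iff_inner_right.1 (h hx)

lemma main_struct {a b : ℕ} (M : Matrix (Fin a) (Fin b) ℝ) (j : ℕ) (hj : 1 ≤ j) (hjb : j ≤ b) :
    0 ≤ singVal M j ∧ ∃ V W : Submodule ℝ (EV b),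
      Module.finrank ℝ V = j ∧ Module.finrank ℝ W + j = b + 1 ∧
      (∀ x ∈ V, (singVal M j)^2 * ‖x‖^2 ≤ ‖Matrix.toEuclideanLin M x‖^2) ∧
      (∀ x ∈ W, ‖Matrix.toEuclideanLin M x‖^2 ≤ (singVal M j)^2 * ‖x‖^2) ∧
      (∀ x, x ∈ V ∨ x ∈ W → ‖Matrix.toEuclideanLin M x‖^2 = (singVal M j)^2 * ‖x‖^2 →
        LinearMap.adjoint (Matrix.toEuclideanLin M) (Matrix.toEuclideanLin M x)
          = (singVal M j)^2 • x) := by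
  set T := Matrix.toEuclideanLin M with hT
  have hpos := T.isPositive_adjoint_comp_self
  have hS := hpos.isSymmetric
  have hn : Module.finrank ℝ (EV b) = b := finrank_euclideanSpace_fin
  set v := hS.eigenvectorBasis hn with hv
  set μ := hS.eigenvalues hn with hμ
  have hanti : Antitone μ := hS.eigenvalues_antitone hn
  have hμ0 : ∀ i, 0 ≤ μ i := hpos.nonneg_eigenvalues hn
  set p : Fin b := ⟨j - 1, by omega⟩ with hp
  have hSv : ∀ (x : EV b) l, inner ℝ (v l) (LinearMap.adjoint T (T x)) = μ l * inner ℝ (v l) x := by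
    intro x l
    have h1 := hS (v l) x
    have h2 := hS.apply_eigenvectorBasis hn l
    rw [← hv] at h2
    rw [h2] at h1
    rw [inner_smul_left] at h1
    simpa using h1.symm
  have hTn : ∀ x : EV b, ‖T x‖^2 = ∑ l, μ l * (inner ℝ (v l) x)^2 := by
    intro x
    rw [← real_inner_self_eq_norm_sq, ← LinearMap.adjoint_inner_right, ← v.sum_inner_mul_inner]
    refine Finset.sum_congr rfl fun l _ => ?_
    rw [hSv, real_inner_comm]
    ring
  have hxn : ∀ x : EV b, ‖x‖^2 = ∑ l, (inner ℝ (v l) x)^2 := by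
    intro x
    rw [← real_inner_self_eq_norm_sq, ← v.sum_inner_mul_inner]
    refine Finset.sum_congr rfl fun l _ => ?_
    rw [real_inner_comm]
    ring
  have hdiff : ∀ x : EV b, ‖T x‖^2 - μ p * ‖x‖^2 = ∑ l, (μ l - μ p) * (inner ℝ (v l) x)^2 := by
    intro x
    rw [hTn, hxn, Finset.mul_sum, ← Finset.sum_sub_distrib]
    exact Finset.sum_congr rfl fun l _ => by ring
  set V := Submodule.span ℝ (v '' (Finset.Iic p : Set (Fin b))) with hV
  set W := Submodule.span ℝ (v '' (Finset.Ici p : Set (Fin b))) with hW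
  have hVt : ∀ x ∈ V, ∀ l, 0 ≤ (μ l - μ p) * (inner ℝ (v l) x)^2 := by
    intro x hx l
    by_cases hl : l ≤ p
    · exact mul_nonneg (sub_nonneg.2 (hanti hl)) (sq_nonneg _)
    · rw [inner_span_zero v (Finset.Iic p) x hx l (by simpa using hl)]
      simp
  have hWt : ∀ x ∈ W, ∀ l, (μ l - μ p) * (inner ℝ (v l) x)^2 ≤ 0 := by
    intro x hx l
    by_cases hl : p ≤ l
    · exact mul_nonpos_of_nonpos_of_nonneg (sub_nonpos.2 (hanti hl)) (sq_nonneg _)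
    · rw [inner_span_zero v (Finset.Ici p) x hx l (by simpa using hl)]
      simp
  have hV1 : Module.finrank ℝ V = j := by
    rw [hV, finrank_span_set, Fin.card_Iic]
    simp [hp]; omega
  have hW1 : Module.finrank ℝ W + j = b + 1 := by
    rw [hW, finrank_span_set, Fin.card_Ici]
    simp [hp]; omega
  have hV2 : ∀ x ∈ V, μ p * ‖x‖^2 ≤ ‖T x‖^2 := by
    intro x hx
    have := Finset.sum_nonneg fun l (_ : l ∈ Finset.univ) => hVt x hx l
    rw [← hdiff] at this
    linarith
  have hW2 : ∀ x ∈ W, ‖T x‖^2 ≤ μ p * ‖x‖^2 := by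
    intro x hx
    have := Finset.sum_nonpos fun l (_ : l ∈ Finset.univ) => hWt x hx l
    rw [← hdiff] at this
    linarith
  have hsq : (√(μ p))^2 = μ p := Real.sq_sqrt (hμ0 p)
  have hσ : singVal M j = √(μ p) := by
    apply le_antisymm
    · refine singVal_le M j _ (Real.sqrt_nonneg _) W (by rw [hW1]; omega) fun x hx => ?_
      refine le_of_sq_le_sq ?_ (by positivity)
      rw [mul_pow, hsq]
      exact hW2 x hx
    · refine le_singVal M j hj _ V hV1 fun x hx => ?_
      refine le_of_sq_le_sq ?_ (by positivity)
      rw [mul_pow, hsq]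
      exact hV2 x hx
  rw [hσ, hsq]
  refine ⟨Real.sqrt_nonneg _, V, W, hV1, hW1, hV2, hW2, ?_⟩
  intro x hx heq
  have h0 : ∑ l, (μ l - μ p) * (inner ℝ (v l) x)^2 = 0 := by
    rw [← hdiff, heq, sub_self]
  have h1 : ∀ l, (μ l - μ p) * (inner ℝ (v l) x)^2 = 0 := by
    intro l
    rcases hx with hx | hx
    · exact (Finset.sum_eq_zero_iff_of_nonneg fun l _ => hVt x hx l).1 h0 l (Finset.mem_univ _)
    · exact (Finset.sum_eq_zero_iff_of_nonpos fun l _ => hWt x hx l).1 h0 l (Finset.mem_univ _)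
  apply v.repr.injective
  ext l
  rw [v.repr_apply_apply, v.repr_apply_apply, hSv, inner_smul_right]
  rcases mul_eq_zero.1 (h1 l) with h | h
  · rw [sub_eq_zero.1 h]
  · rw [pow_eq_zero_iff (by norm_num)] at h
    rw [h]; simp

lemma recur (k : ℕ)
    (α : Fin k → ℝ) (hα : ∀ i, 0 < α i)
    (β : Fin k → ℝ) (hβ : ∀ i, 0 < β i)
    (Bk : Matrix (Fin (k + 1)) (Fin k) ℝ)
    (hBk : ∀ (i : Fin (k + 1)) (j : Fin k),
      Bk i j = if (i : ℕ) = (j : ℕ) then α j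
        else if (i : ℕ) = (j : ℕ) + 1 then β j else 0)
    (x : Fin k → ℝ) (c : ℝ) (h : Bkᵀ *ᵥ (Bk *ᵥ x) = c • x)
    (hlast : ∀ j : Fin k, (j : ℕ) + 1 = k → x j = 0) : x = 0 := by
  set y := Bk *ᵥ x with hy
  have key : ∀ d : ℕ, ∀ j : Fin k, (j : ℕ) + 1 + d = k → x j = 0 ∧ y j.succ = 0 := by
    intro d
    induction d with
    | zero =>
      intro j hj
      refine ⟨hlast j hj, ?_⟩
      rw [hy, Matrix.mulVec, dotProduct]
      refine Finset.sum_eq_zero fun l _ => ?_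
      by_cases hl : l = j
      · rw [hl, hlast j hj, mul_zero]
      · have : (l : ℕ) ≠ j := fun h => hl (Fin.ext h)
        have := l.2
        rw [hBk, if_neg (by simp; omega), if_neg (by simp; omega), zero_mul]
    | succ d ih =>
      intro j hj
      have hj1 : (j : ℕ) + 1 < k := by omega
      obtain ⟨hx1, hy1⟩ := ih ⟨j + 1, hj1⟩ (by simp; omega)
      have hrow := congrFun h ⟨j + 1, hj1⟩
      rw [Pi.smul_apply, hx1, smul_zero, Matrix.mulVec, dotProduct,
        Finset.sum_eq_single j.succ] at hrow
      · rw [Matrix.transpose_apply, hBk, if_pos (by simp)] at hrow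
        have hy2 := (mul_eq_zero.1 hrow).resolve_left (hα _).ne'
        refine ⟨?_, hy2⟩
        rw [hy, Matrix.mulVec, dotProduct, Finset.sum_eq_single j] at hy2
        · rw [hBk, if_neg (by simp), if_pos (by simp)] at hy2
          exact (mul_eq_zero.1 hy2).resolve_left (hβ _).ne'
        · intro l _ hl
          by_cases hl2 : l = ⟨j + 1, hj1⟩
          · rw [hl2, hx1, mul_zero]
          · have h1 : (l : ℕ) ≠ j := fun h => hl (Fin.ext h)
            have h2 : (l : ℕ) ≠ j + 1 := fun h => hl2 (Fin.ext h)
            rw [hBk, if_neg (by simp; omega), if_neg (by simp; omega), zero_mul]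
        · simp
      · intro l _ hl
        by_cases hl2 : l = Fin.succ ⟨j + 1, hj1⟩
        · rw [hl2, hy1, mul_zero]
        · have h1 : (l : ℕ) ≠ j + 1 := fun h => hl (Fin.ext (by simpa using h))
          have h2 : (l : ℕ) ≠ j + 1 + 1 := fun h => hl2 (Fin.ext (by simpa using h))
          rw [Matrix.transpose_apply, hBk, if_neg (by simpa using h1), if_neg (by simpa using h2),
            zero_mul]
      · simp
  funext j
  exact (key (k - (j + 1)) j (by have := j.2; omega)).1

lemma adj_apply {a b : ℕ} (M : Matrix (Fin a) (Fin b) ℝ) (x : EV b) (c : ℝ)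
    (h : LinearMap.adjoint (Matrix.toEuclideanLin M) (Matrix.toEuclideanLin M x) = c • x) :
    Mᵀ *ᵥ (M *ᵥ x.ofLp) = c • x.ofLp := by
  rw [← Matrix.toEuclideanLin_conjTranspose_eq_adjoint] at h
  have := congrArg WithLp.ofLp h
  simpa [Matrix.toLpLin_apply] using this

end BidiagAux

open BidiagAux in
/-- the singular values of a positive lower bidiagonal `(k+1) × k` matrix `B_k`
and of the square matrix `B̄_k` of its first `k` rows are simple and strictly interlace:
`θ_1 > θ̄_1 > θ_2 > θ̄_2 > ⋯ > θ_k > θ̄_k`. -/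
theorem singularValues_bidiagonal_first_rows_strictly_interlace
    (k : ℕ) (hk : 1 ≤ k)
    (α : Fin k → ℝ) (hα : ∀ i, 0 < α i)
    (β : Fin k → ℝ) (hβ : ∀ i, 0 < β i)
    (Bk : Matrix (Fin (k + 1)) (Fin k) ℝ)
    (hBk : ∀ (i : Fin (k + 1)) (j : Fin k),
      Bk i j = if (i : ℕ) = (j : ℕ) then α j
        else if (i : ℕ) = (j : ℕ) + 1 then β j else 0) :
    ∀ i : ℕ, 1 ≤ i → i ≤ k →
      (singVal (subUL Bk k k (by omega) (by omega)) i < singVal Bk i ∧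
        (i < k → singVal Bk (i + 1) < singVal (subUL Bk k k (by omega) (by omega)) i)) := by
  intro i hi1 hik
  obtain ⟨m, rfl⟩ : ∃ m, k = m + 1 := ⟨k - 1, by omega⟩
  set C := subUL Bk (m + 1) (m + 1) (by omega) (by omega) with hC
  set q : Fin (m + 1) := Fin.last m with hq
  have hnorm : ∀ x : EV (m + 1), ‖Matrix.toEuclideanLin Bk x‖^2
      = ‖Matrix.toEuclideanLin C x‖^2 + (β q * x q)^2 := by
    intro x
    rw [EuclideanSpace.real_norm_sq_eq, EuclideanSpace.real_norm_sq_eq, Fin.sum_univ_castSucc]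
    congr 1
    congr 1
    simp only [Matrix.toLpLin_apply, Matrix.mulVec, dotProduct]
    rw [Finset.sum_eq_single q]
    · rw [hBk, if_neg (by simp [hq]), if_pos (by simp [hq])]
    · intro l _ hl
      have h1 : (l : ℕ) ≠ m := fun h => hl (Fin.ext (by simpa [hq] using h))
      have := l.2
      rw [hBk, if_neg (by simp; omega), if_neg (by simp; omega), zero_mul]
    · simp
  have hfin : ∀ (x : EV (m + 1)) (c : ℝ),
      LinearMap.adjoint (Matrix.toEuclideanLin Bk) (Matrix.toEuclideanLin Bk x) = c • x →
      x q = 0 → x = 0 := by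
    intro x c h hx
    have := recur (m + 1) α hα β hβ Bk hBk x.ofLp c (adj_apply Bk x c h) (by
      intro j hj
      have : j = q := Fin.ext (by simp [hq]; omega)
      rw [this]; exact hx)
    ext l
    exact congrFun this l
  obtain ⟨c0, V', W', hV'1, hW'1, hV'2, hW'2, -⟩ := main_struct C i hi1 hik
  refine ⟨?_, fun hlt => ?_⟩
  · obtain ⟨b0, V, W, hV1, hW1, hV2, hW2, hE⟩ := main_struct Bk i hi1 hik
    by_contra! hcon
    obtain ⟨x, hxV, hxW, hx0⟩ := exists_inf V' W (by omega)
    have h1 := hV'2 x hxV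
    have h2 := hW2 x hxW
    have h3 := hnorm x
    have h4 : singVal Bk i ^ 2 * ‖x‖^2 ≤ singVal C i ^ 2 * ‖x‖^2 := by gcongr
    have h5 : (β q * x q)^2 = 0 := le_antisymm (by linarith) (sq_nonneg _)
    have h6 : x q = 0 := by
      have := (hβ q).ne'
      simpa [this] using h5
    have h7 := hE x (Or.inr hxW) (by linarith)
    exact hx0 (hfin x _ h7 h6)
  · obtain ⟨b0, V, W, hV1, hW1, hV2, hW2, hE⟩ := main_struct Bk (i + 1) (by omega) (by omega)
    by_contra! hcon
    set H : Submodule ℝ (EV (m + 1)) := (ℝ ∙ (EuclideanSpace.single q (1 : ℝ) : EV (m + 1)))ᗮ with hH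
    have hHm : ∀ x ∈ H, x q = 0 := by
      intro x hx
      have := Submodule.mem_orthogonal_singleton_iff_inner_right.1 hx
      simpa [EuclideanSpace.inner_single_left] using this
    have hHf : Module.finrank ℝ H + 1 = m + 1 := by
      have h1 : Module.finrank ℝ (ℝ ∙ (EuclideanSpace.single q (1 : ℝ) : EV (m + 1))) +
          Module.finrank ℝ H = m + 1 := (Submodule.finrank_add_finrank_orthogonal
        (ℝ ∙ (EuclideanSpace.single q (1 : ℝ) : EV (m + 1)))).trans finrank_euclideanSpace_fin
      rw [finrank_span_singleton (by simp)] at h1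
      omega
    have hVW : Module.finrank ℝ (V ⊓ W' : Submodule ℝ (EV (m + 1))) ≥ 2 := by
      have h1 := Submodule.finrank_sup_add_finrank_inf_eq V W'
      have h2 := Submodule.finrank_le (V ⊔ W')
      rw [finrank_euclideanSpace_fin] at h2
      omega
    obtain ⟨x, hxVW, hxH, hx0⟩ := exists_inf (V ⊓ W') H (by omega)
    have h1 := hV2 x hxVW.1
    have h2 := hW'2 x hxVW.2
    have h3 := hnorm x
    have h6 := hHm x hxH
    rw [h6] at h3
    have h4 : singVal C i ^ 2 * ‖x‖^2 ≤ singVal Bk (i + 1) ^ 2 * ‖x‖^2 := by gcongr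
    have h7 := hE x (Or.inl hxVW.1) (by linarith)
    exact hx0 (hfin x _ h7 h6)
end
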